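/- Under the condition λ₁ ≤ ρ_q < (λ₁+λ₂)/2, the matrix B − ρ_q I is symmetric positive definite, and the set Y is the closed ball in the (B − ρ_q I)-inner product with center −z and radius (zᵀ(B − ρ_q I)z)^{1/2}, where z = (B − ρ_q I)⁻¹b; explicitly, Y = {y ∈ ℝ^{n−1} : (y+z)ᵀ(B − ρ_q I)(y+z) ≤ zᵀ(B − ρ_q I)z}. In particular, Y is a convex set. -/

import Mathlib

open Matrix

noncomputable def Mnorm {n : ℕ} (M : Matrix (Fin n) (Fin n) ℝ) (x : Fin n → ℝ) : ℝ :=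
  Real.sqrt (x ⬝ᵥ (M *ᵥ x))

noncomputable def Rq {n : ℕ} (A M : Matrix (Fin n) (Fin n) ℝ) (x : Fin n → ℝ) : ℝ :=
  (x ⬝ᵥ (A *ᵥ x)) / (x ⬝ᵥ (M *ᵥ x))

/-- ψ(x) = QᵀMx / (qᵀMx) -/
noncomputable def psiMap {n m : ℕ} (M : Matrix (Fin n) (Fin n) ℝ) (q : Fin n → ℝ)
    (Q : Matrix (Fin n) (Fin m) ℝ) (x : Fin n → ℝ) : Fin m → ℝ :=
  (q ⬝ᵥ (M *ᵥ x))⁻¹ • ((Qᵀ * M) *ᵥ x)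

/-- ψ†(y) = (Qy + q)/‖Qy + q‖_M -/
noncomputable def psiDag {n m : ℕ} (M : Matrix (Fin n) (Fin n) ℝ) (q : Fin n → ℝ)
    (Q : Matrix (Fin n) (Fin m) ℝ) (y : Fin m → ℝ) : Fin n → ℝ :=
  (Mnorm M (Q *ᵥ y + q))⁻¹ • (Q *ᵥ y + q)

/-- The hemisphere S₊ = {x : ‖x‖_M = 1, qᵀMx > 0}. -/
def Splus {n : ℕ} (M : Matrix (Fin n) (Fin n) ℝ) (q : Fin n → ℝ) : Set (Fin n → ℝ) :=
  {x | Mnorm M x = 1 ∧ 0 < q ⬝ᵥ (M *ᵥ x)}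

/-- X = {x ∈ S₊ : Rq(x) ≤ Rq(q)}. -/
def Xset {n : ℕ} (A M : Matrix (Fin n) (Fin n) ℝ) (q : Fin n → ℝ) : Set (Fin n → ℝ) :=
  {x | x ∈ Splus M q ∧ Rq A M x ≤ Rq A M q}

/-- φ(y) = (yᵀBy + 2yᵀb + ρ)/(yᵀy + 1). -/
noncomputable def phiAux {m : ℕ} (B : Matrix (Fin m) (Fin m) ℝ) (b : Fin m → ℝ) (ρ : ℝ)
    (y : Fin m → ℝ) : ℝ :=
  (y ⬝ᵥ (B *ᵥ y) + 2 * (y ⬝ᵥ b) + ρ) / (y ⬝ᵥ y + 1)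

/-!
Write `x ∈ S₊` in the frame `[q, Q]` as `x = t • (Q y + q)` with `t = qᵀMx > 0` and `y = ψ(x)`.
Since `Rq` is invariant under scaling, `Rq x = Rq (Q y + q) = φ(y)`. Clearing the denominator of
`φ(y) ≤ ρ_q` leaves `yᵀ(B - ρ_q I)y + 2 yᵀb ≤ 0`, to which one completes the square.

For definiteness, expanding in the eigenbasis gives `xᵀAx ≥ λ₂ xᵀMx - (λ₂ - λ₁)(xᵀMu₁)²`. Applied
to `q` and to `Q y`, and combined with `(qᵀMu₁)² + ‖QᵀMu₁‖² = 1`, this yields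
`yᵀBy ≥ (λ₁ + λ₂ - ρ_q) yᵀy`.
-/

section QuadraticForm

variable {R ι κ κ' : Type*} [CommRing R] [Fintype ι] [Fintype κ] [Fintype κ']

theorem dotProduct_mulVec_comm_of_isSymm {M : Matrix ι ι R} (hM : M.IsSymm) (x y : ι → R) :
    x ⬝ᵥ (M *ᵥ y) = y ⬝ᵥ (M *ᵥ x) := by
  rw [dotProduct_mulVec, ← mulVec_transpose, hM.eq, dotProduct_comm]

theorem mulVec_dotProduct_mulVec (A : Matrix ι κ' R) (Q : Matrix ι κ R) (y : κ → R) (x : κ' → R) :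
    (Q *ᵥ y) ⬝ᵥ (A *ᵥ x) = y ⬝ᵥ ((Qᵀ * A) *ᵥ x) := by
  rw [← mulVec_mulVec, dotProduct_mulVec y, vecMul_transpose]

theorem add_dotProduct_mulVec_add {M : Matrix ι ι R} (hM : M.IsSymm) (x y : ι → R) :
    (x + y) ⬝ᵥ (M *ᵥ (x + y)) = x ⬝ᵥ (M *ᵥ x) + 2 * (x ⬝ᵥ (M *ᵥ y)) + y ⬝ᵥ (M *ᵥ y) := by
  simp only [mulVec_add, add_dotProduct, dotProduct_add, dotProduct_mulVec_comm_of_isSymm hM y x]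
  ring

theorem smul_dotProduct_mulVec_smul (M : Matrix ι ι R) (t : R) (x : ι → R) :
    (t • x) ⬝ᵥ (M *ᵥ (t • x)) = t ^ 2 * (x ⬝ᵥ (M *ᵥ x)) := by
  simp only [mulVec_smul, smul_dotProduct, dotProduct_smul, smul_eq_mul]
  ring

theorem dotProduct_mulVec_convex_comb (C : Matrix ι ι R) (x y : ι → R) {s t : R}
    (hst : s + t = 1) :
    (s • x + t • y) ⬝ᵥ (C *ᵥ (s • x + t • y)) =
      s * (x ⬝ᵥ (C *ᵥ x)) + t * (y ⬝ᵥ (C *ᵥ y)) - s * t * ((x - y) ⬝ᵥ (C *ᵥ (x - y))) := by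
  obtain rfl : t = 1 - s := eq_sub_of_add_eq' hst
  simp only [mulVec_add, mulVec_sub, mulVec_smul, add_dotProduct, sub_dotProduct, smul_dotProduct,
    dotProduct_add, dotProduct_sub, dotProduct_smul, smul_eq_mul]
  ring

theorem dotProduct_sub_smul_one_mulVec [DecidableEq ι] (B : Matrix ι ι R) (ρ : R) (y : ι → R) :
    y ⬝ᵥ ((B - ρ • 1) *ᵥ y) = y ⬝ᵥ (B *ᵥ y) - ρ * (y ⬝ᵥ y) := by
  rw [sub_mulVec, smul_mulVec, one_mulVec, dotProduct_sub, dotProduct_smul, smul_eq_mul]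

end QuadraticForm

section PositiveDefinite

variable {ι : Type*} [Fintype ι]

theorem convexOn_dotProduct_mulVec {C : Matrix ι ι ℝ} (hC : C.PosSemidef) :
    ConvexOn ℝ Set.univ fun y : ι → ℝ => y ⬝ᵥ (C *ᵥ y) := by
  refine ⟨convex_univ, fun x _ y _ s t hs ht hst => ?_⟩
  have diff_nonneg : 0 ≤ (x - y) ⬝ᵥ (C *ᵥ (x - y)) := by
    simpa only [star_trivial] using hC.dotProduct_mulVec_nonneg (x - y)
  simp only [dotProduct_mulVec_convex_comb C x y hst, smul_eq_mul]
  linarith [mul_nonneg (mul_nonneg hs ht) diff_nonneg]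

theorem convex_setOf_dotProduct_mulVec_le {C : Matrix ι ι ℝ} (hC : C.PosSemidef) (z : ι → ℝ)
    (r : ℝ) : Convex ℝ {y : ι → ℝ | (y + z) ⬝ᵥ (C *ᵥ (y + z)) ≤ r} := by
  simpa using ((convexOn_dotProduct_mulVec hC).translate_left z).convex_le r

theorem posDef_sub_smul_one [DecidableEq ι] {B : Matrix ι ι ℝ} {ρ c : ℝ} (hB : B.IsSymm)
    (hρ : ρ < c) (hc : ∀ y, c * (y ⬝ᵥ y) ≤ y ⬝ᵥ (B *ᵥ y)) : (B - ρ • 1).PosDef := by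
  refine PosDef.of_dotProduct_mulVec_pos ?_ fun y hy => ?_
  · rw [IsHermitian, conjTranspose_eq_transpose_of_trivial]
    exact hB.sub (isSymm_one.smul ρ)
  · have pos : 0 < y ⬝ᵥ y := dotProduct_self_star_pos_iff.mpr hy
    rw [star_trivial, dotProduct_sub_smul_one_mulVec]
    linarith [hc y, mul_lt_mul_of_pos_right hρ pos]

end PositiveDefinite

section OrthonormalBasis

variable {R ι : Type*} [CommRing R] [Fintype ι] [DecidableEq ι] {M : Matrix ι ι R} {u : ι → ι → R}

theorem eq_sum_smul_of_orthonormal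
    (horth : ∀ i j, u i ⬝ᵥ (M *ᵥ u j) = if i = j then (1 : R) else 0) (x : ι → R) :
    x = ∑ i, (x ⬝ᵥ (M *ᵥ u i)) • u i := by
  have gram : of u * (M * (of u)ᵀ) = 1 := by
    ext i j
    rw [one_apply, ← horth i j, mul_apply']
    rfl
  calc x = (x ᵥ* (M * (of u)ᵀ)) ᵥ* of u := by
        rw [vecMul_vecMul, mul_eq_one_comm.mp gram, vecMul_one]
    _ = ∑ i, (x ⬝ᵥ (M *ᵥ u i)) • u i := vecMul_eq_sum _ _

theorem dotProduct_mulVec_eq_sum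
    (horth : ∀ i j, u i ⬝ᵥ (M *ᵥ u j) = if i = j then (1 : R) else 0) (x : ι → R)
    (A : Matrix ι ι R) :
    x ⬝ᵥ (A *ᵥ x) = ∑ i, (x ⬝ᵥ (M *ᵥ u i)) * (x ⬝ᵥ (A *ᵥ u i)) := by
  conv_lhs => rw [congrArg (A *ᵥ ·) (eq_sum_smul_of_orthonormal horth x)]
  simp only [mulVec_sum, mulVec_smul, dotProduct_sum, dotProduct_smul, smul_eq_mul]

theorem le_dotProduct_mulVec_of_eigenbasis {A M : Matrix ι ι ℝ} {u : ι → ι → ℝ} {lam : ι → ℝ}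
    {μ : ℝ} {k : ι}
    (heig : ∀ i, A *ᵥ u i = lam i • (M *ᵥ u i))
    (horth : ∀ i j, u i ⬝ᵥ (M *ᵥ u j) = if i = j then (1 : ℝ) else 0)
    (hμ : ∀ i ≠ k, μ ≤ lam i) (x : ι → ℝ) :
    μ * (x ⬝ᵥ (M *ᵥ x)) - (μ - lam k) * (x ⬝ᵥ (M *ᵥ u k)) ^ 2 ≤ x ⬝ᵥ (A *ᵥ x) := by
  rw [dotProduct_mulVec_eq_sum horth x M, dotProduct_mulVec_eq_sum horth x A,
    ← Finset.add_sum_erase _ _ (Finset.mem_univ k), ← Finset.add_sum_erase _ _ (Finset.mem_univ k),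
    mul_add, Finset.mul_sum]
  simp only [heig, dotProduct_smul, smul_eq_mul]
  have tail_le : ∑ i ∈ Finset.univ.erase k, μ * ((x ⬝ᵥ (M *ᵥ u i)) * (x ⬝ᵥ (M *ᵥ u i))) ≤
      ∑ i ∈ Finset.univ.erase k, (x ⬝ᵥ (M *ᵥ u i)) * (lam i * (x ⬝ᵥ (M *ᵥ u i))) := by
    refine Finset.sum_le_sum fun i hi => ?_
    rw [mul_left_comm (x ⬝ᵥ (M *ᵥ u i))]
    exact mul_le_mul_of_nonneg_right (hμ i (Finset.ne_of_mem_erase hi)) (mul_self_nonneg _)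
  linarith

end OrthonormalBasis

section RayleighQuotient

variable {n : ℕ}

theorem Mnorm_smul (M : Matrix (Fin n) (Fin n) ℝ) (t : ℝ) (x : Fin n → ℝ) :
    Mnorm M (t • x) = |t| * Mnorm M x := by
  rw [Mnorm, smul_dotProduct_mulVec_smul, Real.sqrt_mul (sq_nonneg t), Real.sqrt_sq_eq_abs, Mnorm]

theorem Rq_smul (A M : Matrix (Fin n) (Fin n) ℝ) {t : ℝ} (ht : t ≠ 0) (x : Fin n → ℝ) :
    Rq A M (t • x) = Rq A M x := by
  simp only [Rq, smul_dotProduct_mulVec_smul]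
  exact mul_div_mul_left _ _ (pow_ne_zero 2 ht)

end RayleighQuotient

/-- The columns of `[q, Q]` are orthonormal for the bilinear form of `M`, that is,
`[q, Q]ᵀ M [q, Q] = I`. Only the lower-left off-diagonal block is recorded: the other one is its
transpose when `M` is symmetric. -/
structure IsOrthonormalFrame {n m : ℕ} (M : Matrix (Fin n) (Fin n) ℝ) (q : Fin n → ℝ)
    (Q : Matrix (Fin n) (Fin m) ℝ) : Prop where
  dotProduct_self : q ⬝ᵥ (M *ᵥ q) = 1
  transpose_mul_mul : Qᵀ * M * Q = 1
  transpose_mul_mulVec : (Qᵀ * M) *ᵥ q = 0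

namespace IsOrthonormalFrame

section Chart

variable {n m : ℕ} {A M : Matrix (Fin n) (Fin n) ℝ} {q : Fin n → ℝ} {Q : Matrix (Fin n) (Fin m) ℝ}

theorem mulVec_dotProduct_eq_zero (h : IsOrthonormalFrame M q Q) (y : Fin m → ℝ) :
    (Q *ᵥ y) ⬝ᵥ (M *ᵥ q) = 0 := by
  rw [mulVec_dotProduct_mulVec, h.transpose_mul_mulVec, dotProduct_zero]

theorem mulVec_dotProduct_mulVec_self (h : IsOrthonormalFrame M q Q) (y : Fin m → ℝ) :
    (Q *ᵥ y) ⬝ᵥ (M *ᵥ (Q *ᵥ y)) = y ⬝ᵥ y := by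
  rw [mulVec_dotProduct_mulVec, mulVec_mulVec, h.transpose_mul_mul, one_mulVec]

theorem transpose_mulVec_mulVec_add (h : IsOrthonormalFrame M q Q) (y : Fin m → ℝ) :
    (Qᵀ * M) *ᵥ (Q *ᵥ y + q) = y := by
  rw [mulVec_add, mulVec_mulVec, h.transpose_mul_mul, h.transpose_mul_mulVec, one_mulVec, add_zero]

theorem dotProduct_mulVec_add (h : IsOrthonormalFrame M q Q) (hM : M.IsSymm) (y : Fin m → ℝ) :
    q ⬝ᵥ (M *ᵥ (Q *ᵥ y + q)) = 1 := by
  rw [mulVec_add, dotProduct_add, dotProduct_mulVec_comm_of_isSymm hM q,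
    h.mulVec_dotProduct_eq_zero, h.dotProduct_self, zero_add]

theorem mulVec_add_dotProduct_self (h : IsOrthonormalFrame M q Q) (hM : M.IsSymm)
    (y : Fin m → ℝ) : (Q *ᵥ y + q) ⬝ᵥ (M *ᵥ (Q *ᵥ y + q)) = y ⬝ᵥ y + 1 := by
  rw [add_dotProduct_mulVec_add hM, h.mulVec_dotProduct_mulVec_self, h.mulVec_dotProduct_eq_zero,
    h.dotProduct_self, mul_zero, add_zero]

theorem Mnorm_mulVec_add_pos (h : IsOrthonormalFrame M q Q) (hM : M.IsSymm) (y : Fin m → ℝ) :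
    0 < Mnorm M (Q *ᵥ y + q) := by
  rw [Mnorm, h.mulVec_add_dotProduct_self hM, Real.sqrt_pos]
  exact add_pos_of_nonneg_of_pos (dotProduct_self_star_nonneg y) one_pos

theorem psiDag_mem_Splus (h : IsOrthonormalFrame M q Q) (hM : M.IsSymm) (y : Fin m → ℝ) :
    psiDag M q Q y ∈ Splus M q := by
  have norm_pos := h.Mnorm_mulVec_add_pos hM y
  constructor
  · rw [psiDag, Mnorm_smul, abs_of_pos (inv_pos.mpr norm_pos), inv_mul_cancel₀ norm_pos.ne']
  · rw [psiDag, mulVec_smul, dotProduct_smul, h.dotProduct_mulVec_add hM, smul_eq_mul, mul_one]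
    exact inv_pos.mpr norm_pos

theorem psiMap_psiDag (h : IsOrthonormalFrame M q Q) (hM : M.IsSymm) (y : Fin m → ℝ) :
    psiMap M q Q (psiDag M q Q y) = y := by
  rw [psiMap, psiDag, mulVec_smul, mulVec_smul, dotProduct_smul, h.dotProduct_mulVec_add hM,
    h.transpose_mulVec_mulVec_add, smul_eq_mul, mul_one, inv_inv,
    smul_inv_smul₀ (h.Mnorm_mulVec_add_pos hM y).ne']

theorem Rq_psiDag (h : IsOrthonormalFrame M q Q) (hA : A.IsSymm) (hM : M.IsSymm)
    (y : Fin m → ℝ) :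
    Rq A M (psiDag M q Q y) = phiAux (Qᵀ * A * Q) ((Qᵀ * A) *ᵥ q) (Rq A M q) y := by
  rw [psiDag, Rq_smul _ _ (inv_pos.mpr (h.Mnorm_mulVec_add_pos hM y)).ne', Rq, phiAux, Rq,
    h.mulVec_add_dotProduct_self hM, h.dotProduct_self, div_one, add_dotProduct_mulVec_add hA,
    mulVec_dotProduct_mulVec, mulVec_dotProduct_mulVec, mulVec_mulVec]

end Chart

section Complete

variable {m : ℕ} {A M : Matrix (Fin (m + 1)) (Fin (m + 1)) ℝ} {q : Fin (m + 1) → ℝ}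
  {Q : Matrix (Fin (m + 1)) (Fin m) ℝ}

theorem vecCons_col_orthonormal (h : IsOrthonormalFrame M q Q) (hM : M.IsSymm)
    (i j : Fin (m + 1)) :
    vecCons q Q.col i ⬝ᵥ (M *ᵥ vecCons q Q.col j) = if i = j then (1 : ℝ) else 0 := by
  have col_q (k : Fin m) : Q.col k ⬝ᵥ (M *ᵥ q) = 0 := by
    rw [← mulVec_single_one, h.mulVec_dotProduct_eq_zero]
  have col_col (k l : Fin m) : Q.col k ⬝ᵥ (M *ᵥ Q.col l) = if k = l then (1 : ℝ) else 0 := by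
    rw [← mulVec_single_one, ← mulVec_single_one, mulVec_dotProduct_mulVec, mulVec_mulVec,
      h.transpose_mul_mul, one_mulVec, single_one_dotProduct, Pi.single_apply]
  cases i using Fin.cases <;> cases j using Fin.cases
  · simp [h.dotProduct_self]
  · simp [dotProduct_mulVec_comm_of_isSymm hM q, col_q, (Fin.succ_ne_zero _).symm]
  · simp [col_q]
  · simp [col_col]

theorem eq_mulVec_add_smul (h : IsOrthonormalFrame M q Q) (hM : M.IsSymm)
    (x : Fin (m + 1) → ℝ) : x = Q *ᵥ ((Qᵀ * M) *ᵥ x) + (q ⬝ᵥ (M *ᵥ x)) • q := by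
  have coord (k : Fin m) : x ⬝ᵥ (M *ᵥ Q.col k) = ((Qᵀ * M) *ᵥ x) k := by
    rw [dotProduct_mulVec_comm_of_isSymm hM, ← mulVec_single_one, mulVec_dotProduct_mulVec,
      single_one_dotProduct]
  calc x = ∑ i, (x ⬝ᵥ (M *ᵥ vecCons q Q.col i)) • vecCons q Q.col i :=
        eq_sum_smul_of_orthonormal (h.vecCons_col_orthonormal hM) x
    _ = (q ⬝ᵥ (M *ᵥ x)) • q + ∑ k, ((Qᵀ * M) *ᵥ x) k • Q.col k := by
        simp only [Fin.sum_univ_succ, cons_val_zero, cons_val_succ, coord,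
          dotProduct_mulVec_comm_of_isSymm hM x q]
    _ = Q *ᵥ ((Qᵀ * M) *ᵥ x) + (q ⬝ᵥ (M *ᵥ x)) • q := by
        rw [add_comm (_ • q), mulVec_eq_sum _ Q]
        simp only [op_smul_eq_smul]
        rfl

theorem psiDag_psiMap (h : IsOrthonormalFrame M q Q) (hM : M.IsSymm) {x : Fin (m + 1) → ℝ}
    (hx : x ∈ Splus M q) : psiDag M q Q (psiMap M q Q x) = x := by
  obtain ⟨norm_eq_one, pos⟩ := hx
  have rescale : Q *ᵥ psiMap M q Q x + q = (q ⬝ᵥ (M *ᵥ x))⁻¹ • x := by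
    rw [eq_inv_smul_iff₀ pos.ne', psiMap, mulVec_smul, smul_add, smul_inv_smul₀ pos.ne',
      ← h.eq_mulVec_add_smul hM]
  rw [psiDag, rescale, Mnorm_smul, norm_eq_one, mul_one, abs_of_pos (inv_pos.mpr pos), inv_inv,
    smul_inv_smul₀ pos.ne']

theorem image_psiMap_Xset (h : IsOrthonormalFrame M q Q) (hA : A.IsSymm) (hM : M.IsSymm) :
    psiMap M q Q '' Xset A M q =
      {y | phiAux (Qᵀ * A * Q) ((Qᵀ * A) *ᵥ q) (Rq A M q) y ≤ Rq A M q} := by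
  ext y
  rw [Set.mem_ofPred_eq, ← h.Rq_psiDag hA hM]
  constructor
  · rintro ⟨x, ⟨hx, hle⟩, rfl⟩
    rwa [h.psiDag_psiMap hM hx]
  · exact fun hle => ⟨psiDag M q Q y, ⟨h.psiDag_mem_Splus hM y, hle⟩, h.psiMap_psiDag hM y⟩

theorem parseval (h : IsOrthonormalFrame M q Q) (hM : M.IsSymm)
    (x : Fin (m + 1) → ℝ) :
    ((Qᵀ * M) *ᵥ x) ⬝ᵥ ((Qᵀ * M) *ᵥ x) + (q ⬝ᵥ (M *ᵥ x)) ^ 2 = x ⬝ᵥ (M *ᵥ x) := by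
  conv_rhs => rw [h.eq_mulVec_add_smul hM x]
  rw [add_dotProduct_mulVec_add hM, smul_dotProduct_mulVec_smul, mulVec_smul, dotProduct_smul,
    h.mulVec_dotProduct_mulVec_self, h.mulVec_dotProduct_eq_zero, h.dotProduct_self, smul_zero,
    mul_zero, add_zero, mul_one]

theorem sq_mulVec_dotProduct_le (h : IsOrthonormalFrame M q Q) (hM : M.IsSymm)
    (x : Fin (m + 1) → ℝ) (y : Fin m → ℝ) :
    ((Q *ᵥ y) ⬝ᵥ (M *ᵥ x)) ^ 2 ≤ (y ⬝ᵥ y) * (x ⬝ᵥ (M *ᵥ x) - (q ⬝ᵥ (M *ᵥ x)) ^ 2) := by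
  rw [mulVec_dotProduct_mulVec, ← h.parseval hM x, add_sub_cancel_right]
  simpa only [dotProduct, sq] using
    Finset.sum_mul_sq_le_sq_mul_sq Finset.univ y ((Qᵀ * M) *ᵥ x)

theorem le_dotProduct_compression_mulVec (h : IsOrthonormalFrame M q Q) (hM : M.IsSymm)
    {v : Fin (m + 1) → ℝ} (hv : v ⬝ᵥ (M *ᵥ v) = 1) {lam μ : ℝ} (hle : lam ≤ μ)
    (hspec : ∀ x, μ * (x ⬝ᵥ (M *ᵥ x)) - (μ - lam) * (x ⬝ᵥ (M *ᵥ v)) ^ 2 ≤ x ⬝ᵥ (A *ᵥ x))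
    (y : Fin m → ℝ) :
    (lam + μ - Rq A M q) * (y ⬝ᵥ y) ≤ y ⬝ᵥ ((Qᵀ * A * Q) *ᵥ y) := by
  have bound_Qy : μ * (y ⬝ᵥ y) - (μ - lam) * ((Q *ᵥ y) ⬝ᵥ (M *ᵥ v)) ^ 2 ≤
      y ⬝ᵥ ((Qᵀ * A * Q) *ᵥ y) := by
    rw [← h.mulVec_dotProduct_mulVec_self y, ← mulVec_mulVec, ← mulVec_dotProduct_mulVec A]
    exact hspec (Q *ᵥ y)
  have bound_q : μ - (μ - lam) * (q ⬝ᵥ (M *ᵥ v)) ^ 2 ≤ Rq A M q := by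
    simpa only [Rq, h.dotProduct_self, mul_one, div_one] using hspec q
  have overlap_le : ((Q *ᵥ y) ⬝ᵥ (M *ᵥ v)) ^ 2 ≤ (y ⬝ᵥ y) * (1 - (q ⬝ᵥ (M *ᵥ v)) ^ 2) :=
    hv ▸ h.sq_mulVec_dotProduct_le hM v y
  have nonneg : 0 ≤ y ⬝ᵥ y := dotProduct_self_star_nonneg y
  linarith [mul_le_mul_of_nonneg_right bound_q nonneg,
    mul_le_mul_of_nonneg_left overlap_le (sub_nonneg.mpr hle)]

end Complete

end IsOrthonormalFrame

section CompletingSquare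

theorem phiAux_le_iff {m : ℕ} {B : Matrix (Fin m) (Fin m) ℝ} {ρ : ℝ} {b z : Fin m → ℝ}
    (hB : B.IsSymm) (hz : (B - ρ • 1) *ᵥ z = b) (y : Fin m → ℝ) :
    phiAux B b ρ y ≤ ρ ↔ (y + z) ⬝ᵥ ((B - ρ • 1) *ᵥ (y + z)) ≤ z ⬝ᵥ ((B - ρ • 1) *ᵥ z) := by
  have denom_pos : 0 < y ⬝ᵥ y + 1 :=
    add_pos_of_nonneg_of_pos (dotProduct_self_star_nonneg y) one_pos
  rw [phiAux, div_le_iff₀ denom_pos, add_dotProduct_mulVec_add (hB.sub (isSymm_one.smul ρ)), hz,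
    dotProduct_sub_smul_one_mulVec]
  constructor <;> intro hle <;> linarith

end CompletingSquare

theorem stmt_3_general (n : ℕ)
    (A M : Matrix (Fin (n + 2)) (Fin (n + 2)) ℝ)
    (hA : A.IsSymm) (hM : M.IsSymm)
    (q : Fin (n + 2) → ℝ) (Q : Matrix (Fin (n + 2)) (Fin (n + 1)) ℝ)
    (hq1 : q ⬝ᵥ (M *ᵥ q) = 1)
    (hQMQ : Qᵀ * M * Q = 1)
    (hQMq : (Qᵀ * M) *ᵥ q = 0)
    (lam : Fin (n + 2) → ℝ) (u : Fin (n + 2) → Fin (n + 2) → ℝ)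
    (hmono : Monotone lam)
    (heig : ∀ i, A *ᵥ u i = lam i • (M *ᵥ u i))
    (horth : ∀ i j, u i ⬝ᵥ (M *ᵥ u j) = if i = j then (1 : ℝ) else 0)
    (B : Matrix (Fin (n + 1)) (Fin (n + 1)) ℝ) (hB : B = Qᵀ * A * Q)
    (b : Fin (n + 1) → ℝ) (hb : b = (Qᵀ * A) *ᵥ q)
    (ρq : ℝ) (hρq : ρq = Rq A M q)
    (hρ2 : ρq < (lam 0 + lam 1) / 2)
    (z : Fin (n + 1) → ℝ)
    (hz : z = (B - ρq • 1)⁻¹ *ᵥ b) :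
    (B - ρq • 1).PosDef ∧
    psiMap M q Q '' (Xset A M q) =
      {y : Fin (n + 1) → ℝ |
        (y + z) ⬝ᵥ ((B - ρq • 1) *ᵥ (y + z)) ≤ z ⬝ᵥ ((B - ρq • 1) *ᵥ z)} ∧
    Convex ℝ (psiMap M q Q '' (Xset A M q)) := by
  have frame : IsOrthonormalFrame M q Q := ⟨hq1, hQMQ, hQMq⟩
  have hBs : B.IsSymm := by rw [hB]; simp [IsSymm, hA.eq, Matrix.mul_assoc]
  have second_le (i : Fin (n + 2)) (hi : i ≠ 0) : lam 1 ≤ lam i :=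
    hmono (Fin.one_le_of_ne_zero hi)
  have lower_bound (y : Fin (n + 1) → ℝ) :
      (lam 0 + lam 1 - ρq) * (y ⬝ᵥ y) ≤ y ⬝ᵥ (B *ᵥ y) := by
    rw [hρq, hB]
    exact frame.le_dotProduct_compression_mulVec hM (by simp [horth]) (hmono (Fin.zero_le 1))
      (le_dotProduct_mulVec_of_eigenbasis heig horth second_le) y
  have posDef := posDef_sub_smul_one hBs (by linarith : ρq < lam 0 + lam 1 - ρq) lower_bound
  have solves : (B - ρq • 1) *ᵥ z = b := by
    rw [hz, mulVec_mulVec, mul_nonsing_inv _ ((isUnit_iff_isUnit_det _).mp posDef.isUnit),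
      one_mulVec]
  have image_eq := frame.image_psiMap_Xset hA hM
  rw [← hB, ← hb, ← hρq] at image_eq
  simp only [phiAux_le_iff hBs solves] at image_eq
  exact ⟨posDef, image_eq, image_eq ▸ convex_setOf_dotProduct_mulVec_le posDef.posSemidef z _⟩

/-- Under λ₁ ≤ ρ_q < (λ₁+λ₂)/2, B − ρ_q I is symmetric positive definite, and
Y = ψ(X) is the closed ball {y : (y+z)ᵀ(B−ρ_qI)(y+z) ≤ zᵀ(B−ρ_qI)z} with
z = (B−ρ_qI)⁻¹b; in particular Y is convex. -/
theorem stmt_3 (n : ℕ)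
    (A M : Matrix (Fin (n+2)) (Fin (n+2)) ℝ)
    (hA : A.PosDef) (hM : M.PosDef)
    (q : Fin (n+2) → ℝ) (Q : Matrix (Fin (n+2)) (Fin (n+1)) ℝ)
    (hq1 : q ⬝ᵥ (M *ᵥ q) = 1)
    (hQMQ : Qᵀ * M * Q = 1)
    (hQMq : (Qᵀ * M) *ᵥ q = 0)
    (lam : Fin (n+2) → ℝ) (u : Fin (n+2) → Fin (n+2) → ℝ)
    (hlam0 : 0 < lam 0) (hlam01 : lam 0 < lam 1) (hmono : Monotone lam)
    (heig : ∀ i, A *ᵥ u i = lam i • (M *ᵥ u i))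
    (horth : ∀ i j, u i ⬝ᵥ (M *ᵥ u j) = if i = j then (1:ℝ) else 0)
    (hqu1 : 0 < q ⬝ᵥ (M *ᵥ u 0))
    (B : Matrix (Fin (n+1)) (Fin (n+1)) ℝ) (hB : B = Qᵀ * A * Q)
    (b : Fin (n+1) → ℝ) (hb : b = (Qᵀ * A) *ᵥ q)
    (ρq : ℝ) (hρq : ρq = Rq A M q)
    (hρ1 : lam 0 ≤ ρq) (hρ2 : ρq < (lam 0 + lam 1) / 2)
    (z : Fin (n+1) → ℝ)
    (hz : z = (B - ρq • (1 : Matrix (Fin (n+1)) (Fin (n+1)) ℝ))⁻¹ *ᵥ b) :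
    (B - ρq • (1 : Matrix (Fin (n+1)) (Fin (n+1)) ℝ)).PosDef ∧
    psiMap M q Q '' (Xset A M q) =
      {y : Fin (n+1) → ℝ |
        (y + z) ⬝ᵥ ((B - ρq • (1 : Matrix (Fin (n+1)) (Fin (n+1)) ℝ)) *ᵥ (y + z)) ≤
          z ⬝ᵥ ((B - ρq • (1 : Matrix (Fin (n+1)) (Fin (n+1)) ℝ)) *ᵥ z)} ∧
    Convex ℝ (psiMap M q Q '' (Xset A M q)) := by
  exact stmt_3_general n A M hA.isHermitian hM.isHermitian q Q hq1 hQMQ hQMq lam u hmono heig horth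
    B hB b hb ρq hρq hρ2 z hz
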